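/- Let ℓ be a prime, n ≥ 1, and A = (A_{ji}) an n × n integer matrix whose determinant has absolute value a positive power of ℓ (in particular det A ≠ 0, so the cokernel G = ℤⁿ/Aℤⁿ is a finite abelian ℓ-group). Let R = ℤ_ℓ⟦X₁,…,Xₙ⟧, let g_i = ∏_j (1+X_j)^{A_{ji}} − 1 (using that each 1+X_j is a unit, with integer exponents), and let J = (g₁,…,gₙ) be the ideal of R they generate. Then there is an isomorphism of ℤ_ℓ-algebras R/J ≅ ℤ_ℓ[G], where ℤ_ℓ[G] denotes the group algebra of G over ℤ_ℓ, sending the class of 1+X_j to the group element given by the image in G of the j-th standard basis vector of ℤⁿ. -/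

import Mathlib

/-!
Write `R = ℤ_ℓ⟦X₁,…,Xₙ⟧`, `B = ℤ_ℓ[G]` and `|det A| = ℓ ^ m`. By Cramer's rule `G` is killed by
`ℓ ^ m`, and it is finite. Two homomorphisms of algebras are compared.

* In `R/J` the relations `g i = 0` say that the homomorphism `v ↦ ∏ (1 + X j) ^ v j` from `ℤⁿ` to
  `(R/J)ˣ` kills the columns of `A`. It therefore factors through `G` (`exists_cokernelHom`) and
  extends to `ψ : B → R/J`.
* In `B`, an element `x - 1` with `x` in `G` satisfies `(x - 1) ^ ℓ ^ m ∈ ℓ B`, and `B` is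
  `ℓ`-adically complete, so power series can be evaluated at such elements. This gives `φ : R → B`
  with `1 + X j ↦ [e j]` (`exists_eval`), which kills `J` (`map_monoUnit`).

By `map_monoUnit` again, the map induced by `φ` is a left inverse of `ψ`, so `ψ` is injective.
For surjectivity it is enough that every power series is congruent to a polynomial modulo `J`
(`adjoin_X_eq_top`). As `G` is killed by `ℓ ^ m`, the ideal `J` contains `(1 + X j) ^ ℓ ^ m - 1`,
which has the form `X j ^ ℓ ^ m + ℓ * u j`. Division with remainder by these series
(`exists_division`) holds modulo `ℓ`, where it is division by `X j ^ ℓ ^ m`, and lifts by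
`ℓ`-adic completeness; the remainder is a polynomial. The isomorphism is the inverse of `ψ`.
-/

noncomputable section

/-- `1 + X j` as a unit of the formal power series ring (its constant coefficient is `1`). -/
def onePlusX (σ : Type*) (K : Type*) [CommRing K] (j : σ) : (MvPowerSeries σ K)ˣ :=
  ((MvPowerSeries.isUnit_iff_constantCoeff (φ := 1 + MvPowerSeries.X j)).mpr (by
    rw [map_add, map_one, MvPowerSeries.constantCoeff_X, add_zero]
    exact isUnit_one)).unit

/-- `g i = ∏ j, (1 + X j) ^ (A j i) − 1`, with integer (possibly negative) exponents, computed
in the unit group of `K⟦X₁,…,Xₙ⟧`. -/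
def gSeries (K : Type*) [CommRing K] (n : ℕ) (A : Matrix (Fin n) (Fin n) ℤ) (i : Fin n) :
    MvPowerSeries (Fin n) K :=
  ((∏ j, onePlusX (Fin n) K j ^ A j i : (MvPowerSeries (Fin n) K)ˣ) :
    MvPowerSeries (Fin n) K) - 1

/-- The cokernel `G = ℤⁿ/Aℤⁿ` of an integer matrix `A`. -/
def cokernel (n : ℕ) (A : Matrix (Fin n) (Fin n) ℤ) : Type :=
  (Fin n → ℤ) ⧸ (LinearMap.range (Matrix.mulVecLin A)).toAddSubgroup

instance (n : ℕ) (A : Matrix (Fin n) (Fin n) ℤ) : AddCommGroup (cokernel n A) :=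
  inferInstanceAs
    (AddCommGroup ((Fin n → ℤ) ⧸ (LinearMap.range (Matrix.mulVecLin A)).toAddSubgroup))

section helpers

/-! ### Adic completeness and evaluation of power series -/

theorem mem_span_pow_smul_top {K M : Type*} [CommRing K] [AddCommGroup M] [Module K M]
    (p : K) (k : ℕ) (x : M) :
    x ∈ (Ideal.span {p} ^ k • ⊤ : Submodule K M) ↔ ∃ z, x = p ^ k • z := by
  rw [Ideal.span_singleton_pow, Submodule.ideal_span_singleton_smul,
    Submodule.mem_smul_pointwise_iff_exists]
  simp [eq_comm]

/-- A power of a principal ideal acts on a product coordinatewise, so an arbitrary (possibly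
infinite) power of a `p`-adically complete ring is a `p`-adically complete module. This applies to
power series, to group algebras of finite groups and to finite products of these. -/
theorem isAdicComplete_of_equiv_pi {K M ι : Type*} [CommRing K] [AddCommGroup M] [Module K M]
    (p : K) [IsAdicComplete (Ideal.span {p}) K] (e : M ≃ₗ[K] (ι → K)) :
    IsAdicComplete (Ideal.span {p}) M := by
  have key : ∀ (k : ℕ) (x y : M), (x ≡ y [SMOD (Ideal.span {p} ^ k • ⊤ : Submodule K M)]) ↔
      ∀ i, e x i ≡ e y i [SMOD (Ideal.span {p} ^ k • ⊤ : Submodule K K)] := by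
    intro k x y
    simp only [SModEq.sub_mem, mem_span_pow_smul_top]
    constructor
    · rintro ⟨z, hz⟩ i
      exact ⟨e z i, by rw [← Pi.sub_apply, ← map_sub, hz, map_smul, Pi.smul_apply]⟩
    · intro h
      choose z hz using h
      refine ⟨e.symm z, e.injective ?_⟩
      ext i
      simp [hz]
  have h1 : IsHausdorff (Ideal.span {p}) M := ⟨fun x hx => e.injective <| funext fun i => by
    rw [map_zero, Pi.zero_apply]
    refine IsHausdorff.haus (I := Ideal.span {p}) inferInstance _ fun k => ?_
    simpa using (key k x 0).1 (hx k) i⟩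
  have h2 : IsPrecomplete (Ideal.span {p}) M := ⟨fun f hf => by
    have : ∀ i, ∃ L : K, ∀ k, e (f k) i ≡ L [SMOD (Ideal.span {p} ^ k • ⊤ : Submodule K K)] :=
      fun i => IsPrecomplete.prec (I := Ideal.span {p}) inferInstance
        fun hmn => (key _ _ _).1 (hf hmn) i
    choose L hL using this
    exact ⟨e.symm L, fun k => (key _ _ _).2 fun i => by simpa using hL i k⟩⟩
  exact { }

/-- Evaluation of power series at elements that are nilpotent modulo an ideal `I` for which the
target is `I`-adically complete. -/
theorem exists_algHom_of_pow_mem {K S σ : Type*} [CommRing K] [CommRing S] [Algebra K S]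
    [Finite σ] (I : Ideal S) [IsAdicComplete I S] (a : σ → S) (N : ℕ)
    (ha : ∀ j, a j ^ N ∈ I) :
    ∃ φ : MvPowerSeries σ K →ₐ[K] S, ∀ j, φ (MvPowerSeries.X j) = a j := by
  -- Continuity in the coefficients plays no role, so `K` carries the discrete topology.
  let : UniformSpace K := ⊥
  have : DiscreteTopology K := ⟨rfl⟩
  let : WithIdeal S := ⟨I⟩
  obtain ⟨_, _⟩ := (IsAdic.isAdicComplete_iff (I := I) rfl).1 ‹_›
  have hS : ContinuousSMul K S := by
    refine ⟨continuous_prod_of_discrete_left.2 fun c => ?_⟩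
    simp only [Algebra.smul_def]
    fun_prop
  have hev : MvPowerSeries.HasEval a := by
    refine ⟨fun j => ?_, by simp [Filter.cofinite_eq_bot]⟩
    refine (I.hasBasis_nhds_zero_adic.tendsto_right_iff).2 fun m _ => ?_
    filter_upwards [Filter.eventually_ge_atTop (N * m)] with k hk
    obtain ⟨r, rfl⟩ := Nat.exists_eq_add_of_le hk
    rw [pow_add, pow_mul]
    exact Ideal.mul_mem_right _ _ (Ideal.pow_mem_pow (ha j) m)
  have : IsUniformAddGroup K := ⟨DiscreteUniformity.uniformContinuous (X := K × K) _⟩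
  refine ⟨MvPowerSeries.aeval hev, fun j => ?_⟩
  rw [← MvPolynomial.coe_X, MvPowerSeries.aeval_coe, MvPolynomial.aeval_X]

/-! ### Division of power series -/

open MvPowerSeries in
/-- Division by the powers `X j ^ q`: the remainder only involves exponents `< q` in each variable. -/
theorem exists_sub_mem_span_pow {K σ : Type*} [CommRing K] [Fintype σ] [DecidableEq σ] (q : ℕ)
    (f : MvPowerSeries σ K) :
    ∃ (c : (σ → Fin q) → K) (a : σ → MvPowerSeries σ K),
      f = ∑ d, monomial (Finsupp.equivFunOnFinite.symm fun j => (d j : ℕ)) (c d)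
        + ∑ j, a j * X j ^ q := by
  classical
  have hs : ∀ d : σ →₀ ℕ, ∃ s : Option σ, (s = none ∧ ∀ j, d j < q) ∨ ∃ j, s = some j ∧ q ≤ d j := by
    intro d
    by_cases h : ∀ j, d j < q
    · exact ⟨none, .inl ⟨rfl, h⟩⟩
    · push Not at h
      obtain ⟨j, hj⟩ := h
      exact ⟨some j, .inr ⟨j, rfl, hj⟩⟩
  -- `s d` is a variable whose exponent in `d` is at least `q`, if there is one; the monomial `d` is
  -- assigned to the corresponding quotient.
  choose s hs using hs
  refine ⟨fun d => coeff (Finsupp.equivFunOnFinite.symm fun j => (d j : ℕ)) f,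
    fun j e => if s (e + Finsupp.single j q) = some j then
      coeff (e + Finsupp.single j q) f else 0, ?_⟩
  ext d
  have hc : ∀ (j : σ), coeff d ((show MvPowerSeries σ K from fun e =>
      if s (e + Finsupp.single j q) = some j then
      coeff (e + Finsupp.single j q) f else 0) * X j ^ q)
      = if s d = some j then coeff d f else 0 := by
    intro j
    rw [X_pow_eq, coeff_mul_monomial, mul_one]
    have hle : Finsupp.single j q ≤ d ↔ q ≤ d j := by simp
    split_ifs with h1 h2 h2
    · rw [coeff_apply, tsub_add_cancel_of_le h1, if_pos h2]
    · rw [coeff_apply, tsub_add_cancel_of_le h1, if_neg h2]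
    · exfalso
      rcases hs d with ⟨h, -⟩ | ⟨j', h, h'⟩
      · simp [h] at h2
      · rw [h] at h2
        obtain rfl := Option.some_injective _ h2
        exact h1 (hle.2 h')
    · rfl
  rw [map_add, map_sum, map_sum]
  simp only [hc, coeff_monomial]
  rcases hs d with ⟨h, hd⟩ | ⟨j, h, hd⟩
  · rw [Finset.sum_eq_single (fun j => ⟨d j, hd j⟩)]
    · simp [h]
    · intro b _ hb
      rw [if_neg]
      rintro rfl
      exact hb (funext fun j => by ext; simp)
    · simp
  · rw [Finset.sum_eq_zero]
    · simp [h]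
    · intro b _
      rw [if_neg]
      rintro rfl
      simp at hd
      exact absurd (b j).2 (by omega)

open MvPowerSeries in
/-- Weierstrass-type division in several variables by perturbations `X j ^ q + p • u j` of the powers
`X j ^ q`. The map sending remainder and quotients to the series they represent is surjective
modulo `p`, hence surjective, as its source and target are `p`-adically complete. -/
theorem exists_division {K σ : Type*} [CommRing K] [Fintype σ] [DecidableEq σ] (p : K)
    [IsAdicComplete (Ideal.span {p}) K] (q : ℕ) (u : σ → MvPowerSeries σ K)
    (f : MvPowerSeries σ K) :
    ∃ (c : (σ → Fin q) → K) (a : σ → MvPowerSeries σ K),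
      f = ∑ d, monomial (Finsupp.equivFunOnFinite.symm fun j => (d j : ℕ)) (c d)
        + ∑ j, a j * (X j ^ q + p • u j) := by
  let T : ((σ → Fin q) → K) × (σ → MvPowerSeries σ K) →ₗ[K] MvPowerSeries σ K :=
    { toFun := fun x =>
        ∑ d, monomial (Finsupp.equivFunOnFinite.symm fun j => (d j : ℕ)) (x.1 d)
        + ∑ j, x.2 j * (X j ^ q + p • u j)
      map_add' := fun x y => by
        simp only [Prod.fst_add, Prod.snd_add, Pi.add_apply, map_add, add_mul,
          Finset.sum_add_distrib]
        abel
      map_smul' := fun c x => by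
        simp only [Prod.smul_fst, Prod.smul_snd, Pi.smul_apply, map_smul, smul_mul_assoc,
          Finset.smul_sum, smul_add, RingHom.id_apply] }
  let e1 : MvPowerSeries σ K ≃ₗ[K] ((σ →₀ ℕ) → K) := LinearEquiv.refl K _
  let e3 : (σ → MvPowerSeries σ K) ≃ₗ[K] (σ × (σ →₀ ℕ) → K) :=
    (LinearEquiv.piCongrRight fun _ => e1).trans (LinearEquiv.curry K K σ (σ →₀ ℕ)).symm
  let e2 : (((σ → Fin q) → K) × (σ → MvPowerSeries σ K)) ≃ₗ[K]
      ((σ → Fin q) ⊕ (σ × (σ →₀ ℕ)) → K) :=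
    (LinearEquiv.prodCongr (LinearEquiv.refl K ((σ → Fin q) → K)) e3).trans
      (LinearEquiv.sumArrowLequivProdArrow (σ → Fin q) (σ × (σ →₀ ℕ)) K K).symm
  have := isAdicComplete_of_equiv_pi p e1
  have := isAdicComplete_of_equiv_pi p e2
  have hT : Function.Surjective T := by
    refine surjective_of_mkQ_comp_surjective (I := Ideal.span {p}) fun y => ?_
    obtain ⟨g, rfl⟩ := Submodule.mkQ_surjective _ y
    obtain ⟨c, a, h⟩ := exists_sub_mem_span_pow q g
    refine ⟨(c, a), ?_⟩
    rw [LinearMap.comp_apply, ← sub_eq_zero, ← map_sub, Submodule.mkQ_apply,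
      Submodule.Quotient.mk_eq_zero, ← pow_one (Ideal.span {p}), mem_span_pow_smul_top]
    refine ⟨∑ j, a j * u j, ?_⟩
    conv_lhs => rw [h]
    simp only [T, LinearMap.coe_mk, AddHom.coe_mk, mul_add, Finset.sum_add_distrib, pow_one,
      mul_smul_comm, Finset.smul_sum]
    abel
  obtain ⟨⟨c, a⟩, h⟩ := hT f
  exact ⟨c, a, h.symm⟩

/-! ### The cokernel and Laurent monomials in the `1 + X j` -/

/-- The class in `ℤⁿ/Aℤⁿ` of an integer vector. -/
def cokernelMk (n : ℕ) (A : Matrix (Fin n) (Fin n) ℤ) : (Fin n → ℤ) →+ cokernel n A :=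
  QuotientAddGroup.mk' _

theorem cokernelMk_surjective (n : ℕ) (A : Matrix (Fin n) (Fin n) ℤ) :
    Function.Surjective (cokernelMk n A) := QuotientAddGroup.mk'_surjective _

theorem cokernelMk_mulVec (n : ℕ) (A : Matrix (Fin n) (Fin n) ℤ) (v : Fin n → ℤ) :
    cokernelMk n A (A.mulVec v) = 0 :=
  (QuotientAddGroup.eq_zero_iff _).2 ⟨v, rfl⟩

theorem det_smul_cokernel (n : ℕ) (A : Matrix (Fin n) (Fin n) ℤ) (g : cokernel n A) :
    A.det • g = 0 := by
  obtain ⟨v, rfl⟩ := cokernelMk_surjective n A g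
  rw [← map_zsmul, ← cokernelMk_mulVec n A (A.adjugate.mulVec v), Matrix.mulVec_mulVec,
    Matrix.mul_adjugate, Matrix.smul_mulVec, Matrix.one_mulVec]

theorem finite_cokernel (n : ℕ) (A : Matrix (Fin n) (Fin n) ℤ) (hA : A.det ≠ 0) :
    Finite (cokernel n A) := by
  have : AddGroup.FG (cokernel n A) := AddGroup.fg_of_surjective (cokernelMk_surjective n A)
  refine AddCommGroup.finite_of_fg_isAddTorsion _ fun g => ?_
  rw [isOfFinAddOrder_iff_zsmul_eq_zero]
  exact ⟨A.det, hA, det_smul_cokernel n A g⟩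

/-- The monomial `∏ j, (1 + X j) ^ v j` with integer exponents `v`, as a homomorphism from
`ℤⁿ` to the units of the power series ring. -/
def monoUnit (K : Type*) [CommRing K] (n : ℕ) :
    Multiplicative (Fin n → ℤ) →* (MvPowerSeries (Fin n) K)ˣ where
  toFun v := ∏ j, onePlusX (Fin n) K j ^ v.toAdd j
  map_one' := by simp
  map_mul' v w := by simp [zpow_add, Finset.prod_mul_distrib]

theorem monoUnit_single (K : Type*) [CommRing K] (n : ℕ) (j : Fin n) :
    (monoUnit K n (.ofAdd (Pi.single j 1)) : MvPowerSeries (Fin n) K)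
      = 1 + MvPowerSeries.X j := by
  have : monoUnit K n (.ofAdd (Pi.single j 1)) = onePlusX (Fin n) K j := by
    change ∏ i, onePlusX (Fin n) K i ^ (Pi.single j 1 : Fin n → ℤ) i = _
    rw [Finset.prod_eq_single j] <;> simp +contextual
  rw [this]
  rfl

theorem monoidHom_ext_single {n : ℕ} {H : Type*} [CommGroup H]
    {f g : Multiplicative (Fin n → ℤ) →* H}
    (h : ∀ j, f (.ofAdd (Pi.single j 1)) = g (.ofAdd (Pi.single j 1))) : f = g := by
  apply AddMonoidHom.toMultiplicativeLeft.symm.injective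
  refine AddMonoidHom.functions_ext _ _ _ fun j k => ?_
  have hk : (Pi.single j k : Fin n → ℤ) = k • Pi.single j 1 := by
    ext i; simp [Pi.single_apply]
  rw [hk, map_zsmul, map_zsmul]
  congr 1
  exact h j

/-- An evaluation sending each `1 + X j` to the class of the `j`-th basis vector sends every Laurent
monomial in the `1 + X j` to the class of its exponent. -/
theorem map_monoUnit {K : Type*} [CommRing K] {n : ℕ} {A : Matrix (Fin n) (Fin n) ℤ}
    (φ : MvPowerSeries (Fin n) K →ₐ[K] AddMonoidAlgebra K (cokernel n A))
    (hφ : ∀ j, φ (MvPowerSeries.X j)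
      = AddMonoidAlgebra.of' K _ (cokernelMk n A (Pi.single j 1)) - 1) (v : Fin n → ℤ) :
    φ (monoUnit K n (.ofAdd v)) = AddMonoidAlgebra.of' K _ (cokernelMk n A v) := by
  have key : (Units.map (φ : MvPowerSeries (Fin n) K →* _)).comp (monoUnit K n)
      = (AddMonoidAlgebra.of K (cokernel n A)).toHomUnits.comp
        (cokernelMk n A).toMultiplicative := by
    refine monoidHom_ext_single fun j => Units.ext ?_
    change φ (monoUnit K n (.ofAdd (Pi.single j 1)) : MvPowerSeries (Fin n) K) =
      AddMonoidAlgebra.of' K _ (cokernelMk n A (Pi.single j 1))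
    rw [monoUnit_single, map_add, map_one, hφ, add_sub_cancel]
  exact congrArg Units.val (DFunLike.congr_fun key (.ofAdd v))

/-- The exponent vector of `g i` is the `i`-th column of `A`. -/
theorem gSeries_eq (K : Type*) [CommRing K] (n : ℕ) (A : Matrix (Fin n) (Fin n) ℤ) (i : Fin n) :
    gSeries K n A i = monoUnit K n (.ofAdd (A.mulVec (Pi.single i 1))) - 1 := by
  rw [Matrix.mulVec_single_one]
  rfl

/-- Universal property of `ℤⁿ/Aℤⁿ`: only the columns of `A` have to be killed. -/
theorem exists_cokernel_lift {n : ℕ} {A : Matrix (Fin n) (Fin n) ℤ} {H : Type*} [CommGroup H]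
    (θ : Multiplicative (Fin n → ℤ) →* H)
    (hθ : ∀ i, θ (.ofAdd (A.mulVec (Pi.single i 1))) = 1) :
    ∃ χ : Multiplicative (cokernel n A) →* H,
      ∀ v, χ (.ofAdd (cokernelMk n A v)) = θ (.ofAdd v) := by
  let α : Multiplicative (Fin n → ℤ) →* Multiplicative (Fin n → ℤ) :=
    AddMonoidHom.toMultiplicative A.mulVecLin.toAddMonoidHom
  have hα : θ.comp α = 1 := monoidHom_ext_single (f := θ.comp α) (g := 1) hθ
  let χ : cokernel n A →+ Additive H :=
    QuotientAddGroup.lift _ (MonoidHom.toAdditiveRight θ) (by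
      rintro _ ⟨v, rfl⟩
      exact DFunLike.congr_fun hα (.ofAdd v))
  exact ⟨AddMonoidHom.toMultiplicativeLeft χ, fun v => rfl⟩

/-- The monomials `∏ j, (1 + X j) ^ v j` modulo `J` only depend on the class of `v` in `ℤⁿ/Aℤⁿ`:
that `g i ∈ J` says exactly that the `i`-th column of `A` is sent to `1`. -/
theorem exists_cokernelHom {K : Type*} [CommRing K] {n : ℕ} {A : Matrix (Fin n) (Fin n) ℤ}
    (J : Ideal (MvPowerSeries (Fin n) K)) (hJ : ∀ i, gSeries K n A i ∈ J) :
    ∃ χ : Multiplicative (cokernel n A) →* (MvPowerSeries (Fin n) K ⧸ J),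
      ∀ v, χ (.ofAdd (cokernelMk n A v)) =
        Ideal.Quotient.mk J (monoUnit K n (.ofAdd v) : MvPowerSeries (Fin n) K) := by
  let θ : Multiplicative (Fin n → ℤ) →* (MvPowerSeries (Fin n) K ⧸ J)ˣ :=
    (Units.map (Ideal.Quotient.mk J : MvPowerSeries (Fin n) K →* _)).comp (monoUnit K n)
  obtain ⟨χ, hχ⟩ := exists_cokernel_lift (H := (MvPowerSeries (Fin n) K ⧸ J)ˣ) (A := A) θ fun i => by
    apply Units.ext
    change Ideal.Quotient.mk J
      (monoUnit K n (.ofAdd (A.mulVec (Pi.single i 1))) : MvPowerSeries (Fin n) K) = 1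
    rw [← map_one (Ideal.Quotient.mk J), Ideal.Quotient.mk_eq_mk_iff_sub_mem, ← gSeries_eq]
    exact hJ i
  exact ⟨(Units.coeHom _).comp χ, fun v => congrArg Units.val (hχ v)⟩

/-! ### The two homomorphisms between `R/J` and the group algebra -/

/-- The Frobenius congruence `(1 + x) ^ ℓ ^ m ≡ 1 + x ^ ℓ ^ m` modulo `ℓ`. -/
theorem exists_one_add_pow {S : Type*} [CommRing S] {ℓ : ℕ} (hℓ : ℓ.Prime) (m : ℕ) (x : S) :
    ∃ u, (1 + x) ^ ℓ ^ m = 1 + x ^ ℓ ^ m + ℓ * u := by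
  obtain ⟨r, hr⟩ := exists_add_pow_prime_pow_eq hℓ (1 : S) x m
  exact ⟨x * r, by rw [hr]; ring⟩

/-- The evaluation homomorphism `ℤ_ℓ⟦X⟧ → ℤ_ℓ[G]`, which exists because `G` is killed by `ℓ ^ m`:
for `x` in `G`, the power `(x - 1) ^ ℓ ^ m` is congruent to `x ^ ℓ ^ m - 1 = 0` modulo `ℓ`. -/
theorem exists_eval (ℓ : ℕ) [Fact ℓ.Prime] (n m : ℕ) (A : Matrix (Fin n) (Fin n) ℤ)
    (hA : A.det.natAbs = ℓ ^ m) (hG : ∀ g : cokernel n A, ℓ ^ m • g = 0) :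
    ∃ φ : MvPowerSeries (Fin n) ℤ_[ℓ] →ₐ[ℤ_[ℓ]] AddMonoidAlgebra ℤ_[ℓ] (cokernel n A),
      ∀ j, φ (MvPowerSeries.X j)
        = AddMonoidAlgebra.of' ℤ_[ℓ] _ (cokernelMk n A (Pi.single j 1)) - 1 := by
  have hℓ : ℓ.Prime := Fact.out
  have hK : IsAdicComplete (Ideal.span {(ℓ : ℤ_[ℓ])}) ℤ_[ℓ] := by
    rw [← PadicInt.maximalIdeal_eq_span_p]; infer_instance
  have hfin : Finite (cokernel n A) := finite_cokernel n A fun h => by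
    rw [h] at hA
    exact (pow_pos hℓ.pos m).ne hA
  have hB := isAdicComplete_of_equiv_pi (ℓ : ℤ_[ℓ])
    ((AddMonoidAlgebra.coeffLinearEquiv (M := cokernel n A) (S := ℤ_[ℓ]) ℤ_[ℓ]).trans
      (Finsupp.linearEquivFunOnFinite ℤ_[ℓ] ℤ_[ℓ] (cokernel n A)))
  let I : Ideal (AddMonoidAlgebra ℤ_[ℓ] (cokernel n A)) :=
    (Ideal.span {(ℓ : ℤ_[ℓ])}).map (algebraMap _ _)
  -- Adic completeness as a `ℤ_[ℓ]`-module gives completeness as a ring for the extended ideal.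
  have h1 : IsHausdorff I (AddMonoidAlgebra ℤ_[ℓ] (cokernel n A)) :=
    IsHausdorff.map_algebraMap_iff.2 inferInstance
  have h2 : IsPrecomplete I (AddMonoidAlgebra ℤ_[ℓ] (cokernel n A)) :=
    IsPrecomplete.map_algebraMap_iff.2 inferInstance
  have h3 : IsAdicComplete I (AddMonoidAlgebra ℤ_[ℓ] (cokernel n A)) := { }
  refine exists_algHom_of_pow_mem I _ (ℓ ^ m) fun j => ?_
  obtain ⟨u, hu⟩ := exists_one_add_pow hℓ m
    (AddMonoidAlgebra.of' ℤ_[ℓ] _ (cokernelMk n A (Pi.single j 1)) - 1)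
  have hx : (AddMonoidAlgebra.of' ℤ_[ℓ] _ (cokernelMk n A (Pi.single j 1))) ^ ℓ ^ m = 1 := by
    change (AddMonoidAlgebra.of ℤ_[ℓ] _ (.ofAdd (cokernelMk n A (Pi.single j 1)))) ^ ℓ ^ m = 1
    rw [← map_pow, ← ofAdd_nsmul, hG, ofAdd_zero, map_one]
  rw [add_sub_cancel, hx] at hu
  have : (AddMonoidAlgebra.of' ℤ_[ℓ] _ (cokernelMk n A (Pi.single j 1)) - 1) ^ ℓ ^ m
      = ℓ * (-u) := by linear_combination -hu
  rw [this]
  refine Ideal.mul_mem_right _ _ ?_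
  have := Ideal.mem_map_of_mem (algebraMap ℤ_[ℓ] (AddMonoidAlgebra ℤ_[ℓ] (cokernel n A)))
    (Ideal.mem_span_singleton_self (ℓ : ℤ_[ℓ]))
  rwa [map_natCast] at this

open MvPowerSeries in
/-- If `J` contains all `(1 + X j) ^ ℓ ^ m - 1`, which are `ℓ`-adic perturbations of `X j ^ ℓ ^ m`,
then every power series is congruent to a polynomial modulo `J`. -/
theorem adjoin_X_eq_top (ℓ : ℕ) [Fact ℓ.Prime] (n m : ℕ)
    (J : Ideal (MvPowerSeries (Fin n) ℤ_[ℓ]))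
    (hJ : ∀ j, (1 + X j) ^ ℓ ^ m - 1 ∈ J)
    (P : Subalgebra ℤ_[ℓ] (MvPowerSeries (Fin n) ℤ_[ℓ] ⧸ J))
    (hP : ∀ j, Ideal.Quotient.mk J (X j) ∈ P) : P = ⊤ := by
  have hK : IsAdicComplete (Ideal.span {(ℓ : ℤ_[ℓ])}) ℤ_[ℓ] := by
    rw [← PadicInt.maximalIdeal_eq_span_p]; infer_instance
  refine eq_top_iff.2 fun y _ => ?_
  obtain ⟨f, rfl⟩ := Ideal.Quotient.mk_surjective y
  choose u hu using fun j => exists_one_add_pow (Fact.out : ℓ.Prime) m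
    (X j : MvPowerSeries (Fin n) ℤ_[ℓ])
  obtain ⟨c, a, h⟩ := exists_division (ℓ : ℤ_[ℓ]) (ℓ ^ m) u f
  have hz : ∀ j, Ideal.Quotient.mk J (X j ^ ℓ ^ m + (ℓ : ℤ_[ℓ]) • u j) = 0 := fun j => by
    rw [Ideal.Quotient.eq_zero_iff_mem]
    convert hJ j using 1
    rw [hu, Nat.cast_smul_eq_nsmul, nsmul_eq_mul]
    ring
  rw [h, map_add, map_sum, map_sum]
  simp only [map_mul, hz, mul_zero, Finset.sum_const_zero, add_zero]
  refine sum_mem fun d _ => ?_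
  have hmono : monomial (Finsupp.equivFunOnFinite.symm fun j => (d j : ℕ)) (c d)
      = c d • ∏ j, (X j : MvPowerSeries (Fin n) ℤ_[ℓ]) ^ (d j : ℕ) := by
    rw [← mul_one (c d), ← smul_eq_mul, map_smul, monomial_one_eq, Finsupp.prod_fintype]
    · simp
    · simp
  rw [hmono]
  change Ideal.Quotient.mkₐ ℤ_[ℓ] J _ ∈ P
  rw [map_smul, map_prod]
  refine P.smul_mem (prod_mem fun j _ => ?_) _
  rw [map_pow]
  exact pow_mem (hP j) _

end helpers

/-- Let `ℓ` be a prime, `n ≥ 1`, and `A` an `n × n` integer matrix whose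
determinant has absolute value a positive power of `ℓ` (so the cokernel `G = ℤⁿ/Aℤⁿ` is a
finite abelian `ℓ`-group).  Let `R = ℤ_ℓ⟦X₁,…,Xₙ⟧`, let `g i = ∏ j (1+X j)^{A j i} − 1`, and
let `J = (g₁,…,gₙ)` be the ideal they generate.  Then there is an isomorphism of
`ℤ_ℓ`-algebras `R/J ≅ ℤ_ℓ[G]` sending the class of `1 + X j` to the group element given by
the image in `G` of the `j`-th standard basis vector of `ℤⁿ`. -/
theorem stmt_8 (ℓ : ℕ) [Fact ℓ.Prime] (n : ℕ) (hn : 1 ≤ n)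
    (A : Matrix (Fin n) (Fin n) ℤ) (hA : ∃ m : ℕ, 1 ≤ m ∧ A.det.natAbs = ℓ ^ m) :
    ∃ e : (MvPowerSeries (Fin n) ℤ_[ℓ] ⧸
            Ideal.span (Set.range (gSeries ℤ_[ℓ] n A)))
          ≃ₐ[ℤ_[ℓ]] AddMonoidAlgebra ℤ_[ℓ] (cokernel n A),
      ∀ j : Fin n,
        e (Ideal.Quotient.mk (Ideal.span (Set.range (gSeries ℤ_[ℓ] n A)))
            (1 + MvPowerSeries.X j))
          = AddMonoidAlgebra.of' ℤ_[ℓ] (cokernel n A)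
              (QuotientAddGroup.mk (Pi.single j (1 : ℤ))) := by
  obtain ⟨m, -, hm⟩ := hA
  have hG : ∀ g : cokernel n A, ℓ ^ m • g = 0 := fun g => by
    have h := det_smul_cokernel n A g
    rw [← hm]
    rcases Int.natAbs_eq A.det with h' | h' <;> rw [h'] at h
    · simpa using h
    · simpa using h
  obtain ⟨φ, hφ⟩ := exists_eval ℓ n m A hm hG
  set J := Ideal.span (Set.range (gSeries ℤ_[ℓ] n A)) with hJ
  obtain ⟨χ, hχ⟩ := exists_cokernelHom J fun i => Ideal.subset_span ⟨i, rfl⟩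
  have hφJ : ∀ f ∈ J, φ f = 0 := by
    suffices J ≤ RingHom.ker φ from fun f hf => this hf
    rw [hJ, Ideal.span_le]
    rintro _ ⟨i, rfl⟩
    change φ _ = 0
    rw [gSeries_eq, map_sub, map_monoUnit φ hφ, cokernelMk_mulVec, map_one, sub_eq_zero]
    rfl
  let φ' := Ideal.Quotient.liftₐ J φ hφJ
  let ψ := AddMonoidAlgebra.lift ℤ_[ℓ] (MvPowerSeries (Fin n) ℤ_[ℓ] ⧸ J) (cokernel n A) χ
  have hψ : ∀ v, ψ (AddMonoidAlgebra.of' ℤ_[ℓ] _ (cokernelMk n A v)) =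
      Ideal.Quotient.mk J (monoUnit ℤ_[ℓ] n (.ofAdd v) : MvPowerSeries (Fin n) ℤ_[ℓ]) := by
    intro v
    rw [← hχ]
    exact AddMonoidAlgebra.lift_of' ..
  have hX : ∀ j, ψ (AddMonoidAlgebra.of' ℤ_[ℓ] _ (cokernelMk n A (Pi.single j 1))) =
      Ideal.Quotient.mk J (1 + MvPowerSeries.X j) := fun j => by rw [hψ, monoUnit_single]
  have hleft : φ'.comp ψ = AlgHom.id _ _ := by
    refine AddMonoidAlgebra.algHom_ext (fun g => ?_) (Subsingleton.elim _ _)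
    obtain ⟨v, rfl⟩ := cokernelMk_surjective n A g
    change φ' (ψ (AddMonoidAlgebra.of' ℤ_[ℓ] _ (cokernelMk n A v))) = _
    rw [hψ]
    exact map_monoUnit φ hφ v
  have hpow : ∀ j, (1 + MvPowerSeries.X j) ^ ℓ ^ m - 1 ∈ J := fun j => by
    rw [← Ideal.Quotient.mk_eq_mk_iff_sub_mem, map_pow, ← hX, ← map_pow]
    change ψ ((AddMonoidAlgebra.of ℤ_[ℓ] _ (.ofAdd (cokernelMk n A (Pi.single j 1)))) ^ ℓ ^ m) = _
    rw [← map_pow, ← ofAdd_nsmul, hG, ofAdd_zero, map_one, map_one, map_one]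
  have hsurj : Function.Surjective ψ := by
    rw [← AlgHom.range_eq_top]
    refine adjoin_X_eq_top ℓ n m J hpow _ fun j => ?_
    refine ⟨AddMonoidAlgebra.of' ℤ_[ℓ] _ (cokernelMk n A (Pi.single j 1)) - 1, ?_⟩
    change ψ _ = _
    rw [map_sub, hX, map_one, map_add, map_one, add_sub_cancel_left]
  have hinj : Function.Injective ψ :=
    Function.LeftInverse.injective (g := φ') fun x => DFunLike.congr_fun hleft x
  let e := AlgEquiv.ofBijective ψ ⟨hinj, hsurj⟩
  refine ⟨e.symm, fun j => ?_⟩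
  rw [AlgEquiv.symm_apply_eq]
  exact (hX j).symm

end
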